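/- There is a universal constant K > 0 such that the following holds. For any 0 < t ≤ s ≤ T with G_{t,s}/σ_t² ≤ 1/(K·d), the forward process satisfies E‖∇log p_t(x_t) − ∇log p_t(α_{t,s}^{−1}·x_s)‖² ≤ K·d²·G_{t,s}/σ_t⁴, where the expectation is over the joint forward coupling of (x_t, x_s). -/

import Mathlib

open MeasureTheory Real

noncomputable section

namespace DiffusionKL

/-- Euclidean space `ℝ^d`. -/
abbrev Vec (d : ℕ) := EuclideanSpace ℝ (Fin d)

/-- Density of the isotropic Gaussian `N(m, v·I_d)` on `ℝ^d`. -/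
def gaussDensity (d : ℕ) (m : Vec d) (v : ℝ) (x : Vec d) : ℝ :=
  (2 * π * v) ^ (-(d : ℝ) / 2) * Real.exp (-‖x - m‖ ^ 2 / (2 * v))

/-- The isotropic Gaussian measure `N(m, v·I_d)` on `ℝ^d`. -/
def gaussMeasure (d : ℕ) (m : Vec d) (v : ℝ) : Measure (Vec d) :=
  MeasureTheory.volume.withDensity (fun x => ENNReal.ofReal (gaussDensity d m v x))

/-- The standard Gaussian measure `γ_d = N(0, I_d)` on `ℝ^d`. -/
def stdGauss (d : ℕ) : Measure (Vec d) := gaussMeasure d 0 1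

/-- Kullback-Leibler divergence `KL(μ ‖ ν) = ∫ log (dμ/dν) dμ`. -/
def KLdiv {d : ℕ} (μ ν : Measure (Vec d)) : ℝ :=
  ∫ x, Real.log ((μ.rnDeriv ν x).toReal) ∂μ

/-- `G_{t,s} = ∫_t^s g(u)² du`. -/
def Gvar (g : ℝ → ℝ) (t s : ℝ) : ℝ := ∫ u in t..s, (g u) ^ 2

/-- `α_{t,s} = exp(−G_{t,s}/2)`. -/
def alphaF (g : ℝ → ℝ) (t s : ℝ) : ℝ := Real.exp (-(Gvar g t s) / 2)

/-- `σ_t² = 1 − exp(−G_t)`. -/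
def sigmaSq (g : ℝ → ℝ) (t : ℝ) : ℝ := 1 - Real.exp (-(Gvar g 0 t))

/-- The law of the forward marginal `x_t = α_t X₀ + σ_t Z`, `X₀ ∼ P`, `Z ∼ N(0,I_d)` indep. -/
def forwardLaw (d : ℕ) (P : Measure (Vec d)) (g : ℝ → ℝ) (t : ℝ) : Measure (Vec d) :=
  Measure.map (fun q : Vec d × Vec d => alphaF g 0 t • q.1 + Real.sqrt (sigmaSq g t) • q.2)
    (P.prod (stdGauss d))

/-- Explicit density of the forward marginal `p_t` (for `t > 0`). -/
def forwardDensity (d : ℕ) (P : Measure (Vec d)) (g : ℝ → ℝ) (t : ℝ) (x : Vec d) : ℝ :=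
  (2 * π * sigmaSq g t) ^ (-(d : ℝ) / 2) *
    ∫ y, Real.exp (-‖x - alphaF g 0 t • y‖ ^ 2 / (2 * sigmaSq g t)) ∂P

/-- Score function `∇ log p` of a density `p`. -/
def scoreOf {d : ℕ} (p : Vec d → ℝ) (x : Vec d) : Vec d :=
  gradient (fun z => Real.log (p z)) x

/-- Score `∇ log p_t` of the forward marginal at time `t > 0`. -/
def fwdScore (d : ℕ) (P : Measure (Vec d)) (g : ℝ → ℝ) (t : ℝ) : Vec d → Vec d :=
  scoreOf (forwardDensity d P g t)

/-- Underlying measure for the joint forward coupling: `ω = (X₀, Z, Z')`. -/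
def coupleMeasure (d : ℕ) (P : Measure (Vec d)) : Measure (Vec d × Vec d × Vec d) :=
  P.prod ((stdGauss d).prod (stdGauss d))

/-- The forward process at time `t`: `x_t(ω) = α_t X₀ + σ_t Z`. -/
def xt (d : ℕ) (g : ℝ → ℝ) (t : ℝ) (ω : Vec d × Vec d × Vec d) : Vec d :=
  alphaF g 0 t • ω.1 + Real.sqrt (sigmaSq g t) • ω.2.1

/-- The forward process at time `s ≥ t`, coupled with `x_t` by
`x_s = α_{t,s} x_t + √(1−α_{t,s}²) Z'`. -/
def xts (d : ℕ) (g : ℝ → ℝ) (t s : ℝ) (ω : Vec d × Vec d × Vec d) : Vec d :=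
  alphaF g t s • xt d g t ω + Real.sqrt (1 - (alphaF g t s) ^ 2) • ω.2.2

/-- Law of a Markov chain after `n` steps, started at `init`, with transition kernels `κ`. -/
def chainLaw (d : ℕ) (init : Measure (Vec d)) (κ : ℕ → Vec d → Measure (Vec d)) :
    ℕ → Measure (Vec d)
  | 0 => init
  | k + 1 => (chainLaw d init κ k).bind (κ k)

/-- One step of the exponential-integrator sampler:
`ŷ_{k+1} | ŷ_k = a ∼ N(e^{G_{N−k}/2}·a + 2(e^{G_{N−k}/2} − 1)·s(a,t_{N−k}), (e^{G_{N−k}} − 1)·I_d)`. -/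
def EIstep (d N : ℕ) (tp : ℕ → ℝ) (g : ℝ → ℝ) (sc : Vec d → ℝ → Vec d) (k : ℕ) (a : Vec d) :
    Measure (Vec d) :=
  gaussMeasure d
    (Real.exp (Gvar g (tp (N - k - 1)) (tp (N - k)) / 2) • a +
      (2 * (Real.exp (Gvar g (tp (N - k - 1)) (tp (N - k)) / 2) - 1)) • sc a (tp (N - k)))
    (Real.exp (Gvar g (tp (N - k - 1)) (tp (N - k))) - 1)

/-- One step of the Euler–Maruyama sampler:
`ŷ_{k+1} | ŷ_k = a ∼ N((1 + G_{N−k}/2)·a + G_{N−k}·s(a,t_{N−k}), G_{N−k}·I_d)`. -/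
def EMstep (d N : ℕ) (tp : ℕ → ℝ) (g : ℝ → ℝ) (sc : Vec d → ℝ → Vec d) (k : ℕ) (a : Vec d) :
    Measure (Vec d) :=
  gaussMeasure d
    ((1 + Gvar g (tp (N - k - 1)) (tp (N - k)) / 2) • a +
      (Gvar g (tp (N - k - 1)) (tp (N - k))) • sc a (tp (N - k)))
    (Gvar g (tp (N - k - 1)) (tp (N - k)))

/-- Terminal law of the exponential-integrator sampler started at `N(0,I_d)`. -/
def EIlaw (d N : ℕ) (tp : ℕ → ℝ) (g : ℝ → ℝ) (sc : Vec d → ℝ → Vec d) : Measure (Vec d) :=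
  chainLaw d (stdGauss d) (EIstep d N tp g sc) N

/-- Terminal law of the Euler–Maruyama sampler started at `N(0,I_d)`. -/
def EMlaw (d N : ℕ) (tp : ℕ → ℝ) (g : ℝ → ℝ) (sc : Vec d → ℝ → Vec d) : Measure (Vec d) :=
  chainLaw d (stdGauss d) (EMstep d N tp g sc) N

/-- The weighted L² score estimation error
`(1/G_T)·Σ_{k=1}^N G_k·E_{p_{t_k}} ‖∇log p_{t_k}(x) − s(x,t_k)‖²`. -/
def scoreErr (d N : ℕ) (P : Measure (Vec d)) (g : ℝ → ℝ) (tp : ℕ → ℝ)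
    (sc : Vec d → ℝ → Vec d) : ℝ :=
  (1 / Gvar g 0 (tp N)) * ∑ k ∈ Finset.range N,
    Gvar g (tp k) (tp (k + 1)) *
      ∫ x, ‖fwdScore d P g (tp (k + 1)) x - sc x (tp (k + 1))‖ ^ 2
        ∂(forwardLaw d P g (tp (k + 1)))

/-- Entry `(i,j)` of the Hessian matrix `∇²f(x)`. -/
def hessEntry {d : ℕ} (f : Vec d → ℝ) (x : Vec d) (i j : Fin d) : ℝ :=
  fderiv ℝ (fun y => fderiv ℝ f y (EuclideanSpace.single j 1)) x (EuclideanSpace.single i 1)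

/-- Frobenius norm of the Hessian matrix `∇²f(x)`. -/
def hessFrob {d : ℕ} (f : Vec d → ℝ) (x : Vec d) : ℝ :=
  Real.sqrt (∑ i, ∑ j, (hessEntry f x i j) ^ 2)

/-- Density of the Gaussian perturbation `X + σZ`, `X ∼ P`, `Z ∼ N(0,I_d)`. -/
def perturbDensity (d : ℕ) (P : Measure (Vec d)) (σ : ℝ) (x : Vec d) : ℝ :=
  (2 * π * σ ^ 2) ^ (-(d : ℝ) / 2) * ∫ y, Real.exp (-‖x - y‖ ^ 2 / (2 * σ ^ 2)) ∂P

/-- Density of `μY + σZ`, `Y ∼ P`, `Z ∼ N(0,I_d)`. -/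
def perturbDensity' (d : ℕ) (P : Measure (Vec d)) (μ σ : ℝ) (x : Vec d) : ℝ :=
  (2 * π * σ ^ 2) ^ (-(d : ℝ) / 2) * ∫ y, Real.exp (-‖x - μ • y‖ ^ 2 / (2 * σ ^ 2)) ∂P

/-- Law of the Gaussian perturbation `X + σZ`. -/
def perturbLaw (d : ℕ) (P : Measure (Vec d)) (σ : ℝ) : Measure (Vec d) :=
  Measure.map (fun q : Vec d × Vec d => q.1 + σ • q.2)
    (P.prod (MeasureTheory.volume.withDensity
      (fun x : Vec d => ENNReal.ofReal ((2 * π) ^ (-(d : ℝ) / 2) * Real.exp (-‖x‖ ^ 2 / 2)))))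

/-- The tilted conditional measure `dP̃_{μ,σ}(y|x) ∝ exp(−‖x−μy‖²/(2σ²)) dP(y)`. -/
def tiltMeasure (d : ℕ) (P : Measure (Vec d)) (μ σ : ℝ) (x : Vec d) : Measure (Vec d) :=
  ((P.withDensity (fun y => ENNReal.ofReal (Real.exp (-‖x - μ • y‖ ^ 2 / (2 * σ ^ 2))))) Set.univ)⁻¹ •
    P.withDensity (fun y => ENNReal.ofReal (Real.exp (-‖x - μ • y‖ ^ 2 / (2 * σ ^ 2))))

/-- Sub-exponential (ψ₁-Orlicz) norm of `f` under the measure `μ`. -/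
def psi1Norm {α : Type*} [MeasurableSpace α] (μ : Measure α) (f : α → ℝ) : ℝ :=
  sInf {t : ℝ | 0 < t ∧ ∫ x, Real.exp (|f x| / t) ∂μ ≤ 2}

/-- Sub-Gaussian (ψ₂-Orlicz) norm of `f` under the measure `μ`. -/
def psi2Norm {α : Type*} [MeasurableSpace α] (μ : Measure α) (f : α → ℝ) : ℝ :=
  sInf {t : ℝ | 0 < t ∧ ∫ x, Real.exp ((f x) ^ 2 / t ^ 2) ∂μ ≤ 2}

/-!
After rescaling by `σ_t`, the forward marginal is a Gaussian mixture, and its score at `x` is the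
mean of `m ω - x` under the posterior law of `ω` given the observation `x` (Bayes and Tweedie).
Moving the observation from `x` to `x + δ` tilts this posterior by `exp ⟪m ω - x, δ⟫`, so by
Cauchy–Schwarz the two scores differ by `O(‖δ‖)`, up to exponential moments of `‖m ω - x‖ ^ 2` and
of `⟪m ω - x, δ⟫` under a single posterior. No smoothness of `P` is needed to control these:
averaged over the observation `x = m ω + z`, the tower property makes the posterior law of `m ω - x`
the standard Gaussian, whose exponential moments are explicit.
-/

lemma abs_exp_mul_sub_one_le {ε : ℝ} (hε₀ : 0 ≤ ε) (hε₁ : ε ≤ 1) (x : ℝ) :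
    |exp (ε * x) - 1| ≤ ε * exp |x| := by
  rcases le_total 0 x with hx | hx
  · have hconv : exp (ε * x) ≤ ε * exp x + (1 - ε) := by
      simpa using convexOn_exp.2 (Set.mem_univ x) (Set.mem_univ 0) hε₀ (sub_nonneg.2 hε₁)
        (add_sub_cancel ε 1)
    rw [abs_of_nonneg hx, abs_of_nonneg (sub_nonneg.2 (one_le_exp (mul_nonneg hε₀ hx)))]
    linarith
  · have hεx : ε * x ≤ 0 := mul_nonpos_of_nonneg_of_nonpos hε₀ hx
    rw [abs_of_nonpos hx, abs_of_nonpos (sub_nonpos.2 (exp_le_one_iff.2 hεx))]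
    calc -(exp (ε * x) - 1) ≤ ε * -x := by linarith [add_one_le_exp (ε * x)]
      _ ≤ ε * exp (-x) := by gcongr; linarith [add_one_le_exp (-x)]

lemma le_mul_exp_div {c : ℝ} (hc : 0 < c) (x : ℝ) : x ≤ c * exp (x / c) := by
  calc x = c * (x / c) := by field_simp
    _ ≤ c * exp (x / c) := by gcongr; linarith [add_one_le_exp (x / c)]

lemma integral_sq_norm_le_of_lintegral_sq_enorm_le {α E : Type*} {mα : MeasurableSpace α}
    {μ : Measure α} [NormedAddCommGroup E] {f : α → E} {C : ℝ} (hC : 0 ≤ C)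
    (h : ∫⁻ x, ‖f x‖ₑ ^ 2 ∂μ ≤ ENNReal.ofReal C) : ∫ x, ‖f x‖ ^ 2 ∂μ ≤ C := by
  refine (le_norm_self _).trans <| (norm_integral_le_lintegral_norm _).trans <|
    ENNReal.toReal_le_of_le_ofReal hC (h.trans' (lintegral_mono fun x ↦ ?_))
  rw [norm_pow, norm_norm, ENNReal.ofReal_pow (norm_nonneg _), ofReal_norm]

section Tilting

variable {α E : Type*} {mα : MeasurableSpace α} {μ : Measure α}
  [NormedAddCommGroup E]

lemma integral_sq_norm_le_mul_integral_exp {u : α → E} {c : ℝ} (hc : 0 < c)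
    (hexp : Integrable (fun x ↦ exp (‖u x‖ ^ 2 / c)) μ) :
    ∫ x, ‖u x‖ ^ 2 ∂μ ≤ c * ∫ x, exp (‖u x‖ ^ 2 / c) ∂μ := by
  rw [← integral_const_mul]
  exact integral_mono_of_nonneg (.of_forall fun x ↦ by positivity) (hexp.const_mul c)
    (.of_forall fun x ↦ le_mul_exp_div hc _)

lemma memLp_two_of_integrable_exp {u : α → E} (hu : AEStronglyMeasurable u μ) {c : ℝ} (hc : 0 < c)
    (hexp : Integrable (fun x ↦ exp (‖u x‖ ^ 2 / c)) μ) : MemLp u 2 μ :=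
  (memLp_two_iff_integrable_sq_norm hu).2 <| (hexp.const_mul c).mono' (by fun_prop) <|
    .of_forall fun x ↦ by
      rw [norm_of_nonneg (by positivity)]
      exact le_mul_exp_div hc _

variable [NormedSpace ℝ E]

lemma sq_norm_integral_smul_le {f : α → ℝ} {u : α → E} (hf : MemLp f 2 μ) (hu : MemLp u 2 μ) :
    ‖∫ x, f x • u x ∂μ‖ ^ 2 ≤ (∫ x, f x ^ 2 ∂μ) * ∫ x, ‖u x‖ ^ 2 ∂μ := by
  have hHölder : ∫ x, ‖f x‖ * ‖u x‖ ∂μ ≤ √(∫ x, f x ^ 2 ∂μ) * √(∫ x, ‖u x‖ ^ 2 ∂μ) := by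
    simpa [sqrt_eq_rpow] using integral_mul_norm_le_Lp_mul_Lq (μ := μ) (f := f)
      (g := fun x ↦ ‖u x‖) Real.HolderConjugate.two_two (by simpa using hf) (by simpa using hu.norm)
  have hnorm : ‖∫ x, f x • u x ∂μ‖ ≤ √(∫ x, f x ^ 2 ∂μ) * √(∫ x, ‖u x‖ ^ 2 ∂μ) :=
    (norm_integral_le_integral_norm _).trans (by simpa only [norm_smul] using hHölder)
  calc ‖∫ x, f x • u x ∂μ‖ ^ 2 ≤ (√(∫ x, f x ^ 2 ∂μ) * √(∫ x, ‖u x‖ ^ 2 ∂μ)) ^ 2 := by gcongr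
    _ = _ := by rw [mul_pow, sq_sqrt (by positivity), sq_sqrt (by positivity)]

variable [IsProbabilityMeasure μ]

lemma integrable_exp_of_integrable_exp_nat_mul {n : ℕ} (hn : n ≠ 0) {f : α → ℝ}
    (h : Integrable (fun x ↦ exp (n * f x)) μ) : Integrable (fun x ↦ exp (f x)) μ := by
  simpa using ProbabilityTheory.integrable_exp_mul_of_nonneg_of_le (t := 1) h zero_le_one
    (mod_cast Nat.one_le_iff_ne_zero.2 hn)

lemma integral_exp_pow_le {n : ℕ} (hn : n ≠ 0) {f : α → ℝ}
    (h : Integrable (fun x ↦ exp (n * f x)) μ) :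
    (∫ x, exp (f x) ∂μ) ^ n ≤ ∫ x, exp (n * f x) ∂μ := by
  simp_rw [exp_nat_mul] at h ⊢
  refine (convexOn_pow n).map_integral_le (by fun_prop) isClosed_Ici
    (.of_forall fun x ↦ (exp_pos _).le) ?_ h
  exact integrable_exp_of_integrable_exp_nat_mul hn (by simpa only [exp_nat_mul] using h)

lemma inv_integral_exp_le_integral_exp_neg {f : α → ℝ} (hf : Integrable f μ)
    (hexp : Integrable (fun x ↦ exp (f x)) μ) (hexp_neg : Integrable (fun x ↦ exp (-f x)) μ) :
    (∫ x, exp (f x) ∂μ)⁻¹ ≤ ∫ x, exp (-f x) ∂μ := by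
  have hJensen : ∀ {g : α → ℝ}, Integrable g μ → Integrable (fun x ↦ exp (g x)) μ →
      exp (∫ x, g x ∂μ) ≤ ∫ x, exp (g x) ∂μ := fun hg hg' ↦
    convexOn_exp.map_integral_le continuous_exp.continuousOn isClosed_univ (by simp) hg hg'
  calc (∫ x, exp (f x) ∂μ)⁻¹ ≤ (exp (∫ x, f x ∂μ))⁻¹ :=
        inv_anti₀ (exp_pos _) (hJensen hf hexp)
    _ = exp (∫ x, -f x ∂μ) := by rw [integral_neg, exp_neg]
    _ ≤ ∫ x, exp (-f x) ∂μ := hJensen hf.neg hexp_neg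

lemma integral_tilted_sub_integral {f : α → ℝ} {u : α → E}
    (hf : Integrable (fun x ↦ exp (f x)) μ) (hu : Integrable u μ)
    (hfu : Integrable (fun x ↦ exp (f x) • u x) μ) :
    ∫ x, u x ∂μ.tilted f - ∫ x, u x ∂μ =
      (∫ x, exp (f x) ∂μ)⁻¹ • ∫ x, (exp (f x) - ∫ y, exp (f y) ∂μ) • u x ∂μ := by
  have hZ : ∫ x, exp (f x) ∂μ ≠ 0 := (integral_exp_pos hf).ne'
  have hcenter : ∫ x, (exp (f x) - ∫ y, exp (f y) ∂μ) • u x ∂μ =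
      ∫ x, exp (f x) • u x ∂μ - (∫ y, exp (f y) ∂μ) • ∫ x, u x ∂μ := by
    simp only [sub_smul]
    rw [integral_sub hfu (hu.fun_smul (∫ y, exp (f y) ∂μ)), integral_smul]
  rw [hcenter, smul_sub, inv_smul_smul₀ hZ, integral_tilted, ← integral_smul]
  simp only [smul_smul, div_eq_inv_mul]

/- Cauchy–Schwarz against the density `exp f / Z - 1`; here `1 / Z` is at most `∫ exp (-f)` by
Jensen, and the variance of `exp f` at most its second moment about `1`. -/
lemma sq_norm_integral_tilted_sub_integral_le {f : α → ℝ} {u : α → E} (hf : Integrable f μ)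
    (hexp : MemLp (fun x ↦ exp (f x)) 2 μ) (hexp_neg : Integrable (fun x ↦ exp (-f x)) μ)
    (hu : MemLp u 2 μ) :
    ‖∫ x, u x ∂μ.tilted f - ∫ x, u x ∂μ‖ ^ 2 ≤
      (∫ x, exp (-f x) ∂μ) ^ 2 * ((∫ x, (exp (f x) - 1) ^ 2 ∂μ) * ∫ x, ‖u x‖ ^ 2 ∂μ) := by
  have hexp₁ : Integrable (fun x ↦ exp (f x)) μ := hexp.integrable one_le_two
  have hvar : ∫ x, (exp (f x) - ∫ y, exp (f y) ∂μ) ^ 2 ∂μ ≤ ∫ x, (exp (f x) - 1) ^ 2 ∂μ := by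
    rw [← ProbabilityTheory.variance_eq_integral hexp₁.aemeasurable,
      ← ProbabilityTheory.variance_sub_const hexp₁.1 1]
    exact ProbabilityTheory.variance_le_expectation_sq (hexp₁.1.sub aestronglyMeasurable_const)
  rw [integral_tilted_sub_integral hexp₁ (hu.integrable one_le_two)
      (memLp_one_iff_integrable.1 (hu.smul hexp)), norm_smul, mul_pow,
    norm_of_nonneg (by positivity)]
  gcongr
  · exact inv_integral_exp_le_integral_exp_neg hf hexp₁ hexp_neg
  · refine (sq_norm_integral_smul_le (hexp.sub (memLp_const _)) hu).trans ?_
    exact mul_le_mul_of_nonneg_right hvar (by positivity)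

lemma sq_norm_integral_tilted_mul_sub_integral_le {f : α → ℝ} {u : α → E} {ε : ℝ} (hε₀ : 0 ≤ ε)
    (hε₁ : ε ≤ 1) (hf : AEStronglyMeasurable f μ) (hexp : Integrable (fun x ↦ exp (2 * |f x|)) μ)
    (hu : MemLp u 2 μ) :
    ‖∫ x, u x ∂μ.tilted (fun x ↦ ε * f x) - ∫ x, u x ∂μ‖ ^ 2 ≤
      ε ^ 2 * (∫ x, exp (2 * |f x|) ∂μ) ^ 2 * ∫ x, ‖u x‖ ^ 2 ∂μ := by
  have hexp_abs : Integrable (fun x ↦ exp |f x|) μ :=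
    integrable_exp_of_integrable_exp_nat_mul two_ne_zero (mod_cast hexp)
  have hexp_abs_two : MemLp (fun x ↦ exp |f x|) 2 μ :=
    (memLp_two_iff_integrable_sq hexp_abs.1).2 (by simpa only [← exp_nat_mul] using mod_cast hexp)
  have habs (x) : |ε * f x| ≤ |f x| := by
    rw [abs_mul, abs_of_nonneg hε₀]
    exact mul_le_of_le_one_left (abs_nonneg _) hε₁
  have hf_int : Integrable f μ := hexp_abs.mono' hf <| .of_forall fun x ↦ by
    rw [norm_eq_abs]; linarith [add_one_le_exp |f x|]
  have hexp_neg : Integrable (fun x ↦ exp (-(ε * f x))) μ :=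
    hexp_abs.mono' (by fun_prop) <| .of_forall fun x ↦ by
      rw [norm_of_nonneg (exp_pos _).le]; exact exp_le_exp.2 ((neg_le_abs _).trans (habs x))
  have hexp_two : MemLp (fun x ↦ exp (ε * f x)) 2 μ :=
    hexp_abs_two.mono' (by fun_prop) <| .of_forall fun x ↦ by
      rw [norm_of_nonneg (exp_pos _).le]; exact exp_le_exp.2 ((le_abs_self _).trans (habs x))
  have hmean : (∫ x, exp (-(ε * f x)) ∂μ) ^ 2 ≤ ∫ x, exp (2 * |f x|) ∂μ :=
    calc (∫ x, exp (-(ε * f x)) ∂μ) ^ 2 ≤ (∫ x, exp |f x| ∂μ) ^ 2 := by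
          refine pow_le_pow_left₀ (by positivity) (integral_mono hexp_neg hexp_abs fun x ↦ ?_) 2
          exact exp_le_exp.2 ((neg_le_abs _).trans (habs x))
      _ ≤ ∫ x, exp (2 * |f x|) ∂μ := mod_cast integral_exp_pow_le two_ne_zero (mod_cast hexp)
  have hvar : ∫ x, (exp (ε * f x) - 1) ^ 2 ∂μ ≤ ε ^ 2 * ∫ x, exp (2 * |f x|) ∂μ := by
    rw [← integral_const_mul]
    refine integral_mono_of_nonneg (.of_forall fun x ↦ by positivity) (hexp.const_mul _)
      (.of_forall fun x ↦ ?_)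
    simpa only [mul_pow, ← exp_nat_mul, sq_abs, Nat.cast_ofNat] using
      pow_le_pow_left₀ (abs_nonneg _) (abs_exp_mul_sub_one_le hε₀ hε₁ (f x)) 2
  calc ‖∫ x, u x ∂μ.tilted (fun x ↦ ε * f x) - ∫ x, u x ∂μ‖ ^ 2
      ≤ (∫ x, exp (-(ε * f x)) ∂μ) ^ 2 *
          ((∫ x, (exp (ε * f x) - 1) ^ 2 ∂μ) * ∫ x, ‖u x‖ ^ 2 ∂μ) :=
        sq_norm_integral_tilted_sub_integral_le (hf_int.const_mul ε) hexp_two hexp_neg hu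
    _ ≤ (∫ x, exp (2 * |f x|) ∂μ) *
          ((ε ^ 2 * ∫ x, exp (2 * |f x|) ∂μ) * ∫ x, ‖u x‖ ^ 2 ∂μ) := by gcongr
    _ = _ := by ring

/- The slack `1 / 8` in the tilt pays for Jensen and for the AM–GM step `2 p q ^ 2 ≤ p ^ 2 + q ^ 4`,
which separates the exponential moments of `u` and `η`. -/
lemma sq_norm_integral_tilted_mul_sub_integral_le_add {η : α → ℝ} {u : α → E} {ε c : ℝ}
    (hε₀ : 0 ≤ ε) (hε₁ : ε ≤ 1) (hc : 0 < c) (hη : AEStronglyMeasurable η μ)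
    (hη_exp : Integrable (fun x ↦ exp |η x|) μ) (hu : AEStronglyMeasurable u μ)
    (hu_exp : Integrable (fun x ↦ exp (‖u x‖ ^ 2 / c)) μ) :
    ‖∫ x, u x ∂μ.tilted (fun x ↦ ε * (η x / 8)) - ∫ x, u x ∂μ‖ ^ 2 ≤
      c * ε ^ 2 * (∫ x, exp (‖u x‖ ^ 2 / c) ∂μ + ∫ x, exp |η x| ∂μ) := by
  have hη_eq (x) : |η x| = (4 : ℕ) * (2 * |η x / 8|) := by
    rw [abs_div, abs_of_pos (by norm_num : (0 : ℝ) < 8)]; push_cast; ring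
  have hu_eq (x) : ‖u x‖ ^ 2 / c = (2 : ℕ) * (‖u x‖ ^ 2 / (2 * c)) := by push_cast; field_simp
  have hη_pow : (∫ x, exp (2 * |η x / 8|) ∂μ) ^ 4 ≤ ∫ x, exp |η x| ∂μ := by
    simp only [hη_eq] at hη_exp ⊢
    exact integral_exp_pow_le four_ne_zero hη_exp
  have hu_pow : (∫ x, exp (‖u x‖ ^ 2 / (2 * c)) ∂μ) ^ 2 ≤ ∫ x, exp (‖u x‖ ^ 2 / c) ∂μ := by
    simp only [hu_eq] at hu_exp ⊢
    exact integral_exp_pow_le two_ne_zero hu_exp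
  have hη_exp' : Integrable (fun x ↦ exp (2 * |η x / 8|)) μ :=
    integrable_exp_of_integrable_exp_nat_mul four_ne_zero (by simpa only [← hη_eq] using hη_exp)
  have hu_exp' : Integrable (fun x ↦ exp (‖u x‖ ^ 2 / (2 * c))) μ :=
    integrable_exp_of_integrable_exp_nat_mul two_ne_zero (by simpa only [← hu_eq] using hu_exp)
  set q := ∫ x, exp (2 * |η x / 8|) ∂μ
  set p := ∫ x, exp (‖u x‖ ^ 2 / (2 * c)) ∂μ
  calc ‖∫ x, u x ∂μ.tilted (fun x ↦ ε * (η x / 8)) - ∫ x, u x ∂μ‖ ^ 2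
      ≤ ε ^ 2 * q ^ 2 * ∫ x, ‖u x‖ ^ 2 ∂μ :=
        sq_norm_integral_tilted_mul_sub_integral_le hε₀ hε₁ (by fun_prop) hη_exp'
          (memLp_two_of_integrable_exp hu hc hu_exp)
    _ ≤ ε ^ 2 * q ^ 2 * (2 * c * p) := by
        gcongr
        exact integral_sq_norm_le_mul_integral_exp (by positivity) hu_exp'
    _ = c * ε ^ 2 * (2 * p * q ^ 2) := by ring
    _ ≤ c * ε ^ 2 * (p ^ 2 + (q ^ 2) ^ 2) := by
        gcongr
        exact two_mul_le_add_sq _ _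
    _ ≤ _ := by
        gcongr
        rwa [← pow_mul]

end Tilting

section StandardGaussian

variable {d : ℕ}

lemma lintegral_stdGauss (f : Vec d → ENNReal) :
    ∫⁻ z, f z ∂stdGauss d = ENNReal.ofReal ((2 * π) ^ (-(d : ℝ) / 2)) *
      ∫⁻ z, ENNReal.ofReal (exp (-‖z‖ ^ 2 / 2)) * f z := by
  have hdens : Measurable fun z : Vec d ↦ ENNReal.ofReal (gaussDensity d 0 1 z) := by
    unfold gaussDensity
    fun_prop
  rw [stdGauss, gaussMeasure, lintegral_withDensity_eq_lintegral_mul_non_measurable _ hdens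
    (.of_forall fun _ ↦ ENNReal.ofReal_lt_top), ← lintegral_const_mul' _ _ ENNReal.ofReal_ne_top]
  refine lintegral_congr fun z ↦ ?_
  simp only [Pi.mul_apply, gaussDensity, sub_zero, mul_one]
  rw [ENNReal.ofReal_mul (by positivity), mul_assoc]

lemma lintegral_exp_neg_mul_sq_norm_sub {b : ℝ} (hb : 0 < b) (u : Vec d) :
    ∫⁻ z, ENNReal.ofReal (exp (-b * ‖z - u‖ ^ 2)) = ENNReal.ofReal ((π / b) ^ ((d : ℝ) / 2)) := by
  have hint : ∫ z : Vec d, exp (-b * ‖z‖ ^ 2) = (π / b) ^ ((d : ℝ) / 2) := by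
    simpa using GaussianFourier.integral_rexp_neg_mul_sq_norm (V := Vec d) hb
  have hpos : 0 < (π / b) ^ ((d : ℝ) / 2) := by positivity
  rw [lintegral_sub_right_eq_self (fun z : Vec d ↦ ENNReal.ofReal (exp (-b * ‖z‖ ^ 2))) u, ← hint,
    ofReal_integral_eq_lintegral_ofReal (.of_integral_ne_zero (hint ▸ hpos.ne'))
      (.of_forall fun _ ↦ (exp_pos _).le)]

lemma lintegral_exp_inner_stdGauss (u : Vec d) :
    ∫⁻ z, ENNReal.ofReal (exp (inner ℝ u z)) ∂stdGauss d = ENNReal.ofReal (exp (‖u‖ ^ 2 / 2)) := by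
  have hsquare (z : Vec d) : ENNReal.ofReal (exp (-‖z‖ ^ 2 / 2)) *
      ENNReal.ofReal (exp (inner ℝ u z)) =
        ENNReal.ofReal (exp (‖u‖ ^ 2 / 2)) * ENNReal.ofReal (exp (-(1 / 2) * ‖z - u‖ ^ 2)) := by
    rw [← ENNReal.ofReal_mul (exp_pos _).le, ← ENNReal.ofReal_mul (exp_pos _).le, ← exp_add,
      ← exp_add, norm_sub_sq_real, real_inner_comm]
    ring_nf
  have hconst : (2 * π) ^ (-(d : ℝ) / 2) * (π / (1 / 2)) ^ ((d : ℝ) / 2) = 1 := by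
    rw [div_div_eq_mul_div, div_one, mul_comm π, ← rpow_add (by positivity), neg_div,
      neg_add_cancel, rpow_zero]
  simp_rw [lintegral_stdGauss, hsquare]
  rw [lintegral_const_mul' _ _ ENNReal.ofReal_ne_top,
    lintegral_exp_neg_mul_sq_norm_sub one_half_pos, mul_left_comm,
    ← ENNReal.ofReal_mul (by positivity), hconst, ENNReal.ofReal_one, mul_one]

lemma lintegral_exp_abs_inner_stdGauss_le (u : Vec d) :
    ∫⁻ z, ENNReal.ofReal (exp |inner ℝ u z|) ∂stdGauss d ≤
      2 * ENNReal.ofReal (exp (‖u‖ ^ 2 / 2)) := by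
  calc ∫⁻ z, ENNReal.ofReal (exp |inner ℝ u z|) ∂stdGauss d
      ≤ ∫⁻ z, (ENNReal.ofReal (exp (inner ℝ u z)) + ENNReal.ofReal (exp (inner ℝ (-u) z)))
          ∂stdGauss d := by
        refine lintegral_mono fun z ↦ ?_
        rw [← ENNReal.ofReal_add (exp_pos _).le (exp_pos _).le, inner_neg_left]
        exact ENNReal.ofReal_le_ofReal (exp_abs_le _)
    _ = 2 * ENNReal.ofReal (exp (‖u‖ ^ 2 / 2)) := by
        rw [lintegral_add_left (by fun_prop), lintegral_exp_inner_stdGauss,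
          lintegral_exp_inner_stdGauss, norm_neg, two_mul]

instance : IsProbabilityMeasure (stdGauss d) :=
  ⟨by simpa using lintegral_exp_inner_stdGauss (0 : Vec d)⟩

lemma lintegral_exp_mul_sq_norm_stdGauss {a : ℝ} (ha : a < 1 / 2) :
    ∫⁻ z : Vec d, ENNReal.ofReal (exp (a * ‖z‖ ^ 2)) ∂stdGauss d =
      ENNReal.ofReal ((1 - 2 * a) ^ (-(d : ℝ) / 2)) := by
  have ha' : 0 < 1 - 2 * a := by linarith
  have hmerge (z : Vec d) : ENNReal.ofReal (exp (-‖z‖ ^ 2 / 2)) *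
      ENNReal.ofReal (exp (a * ‖z‖ ^ 2)) =
        ENNReal.ofReal (exp (-((1 - 2 * a) / 2) * ‖z - 0‖ ^ 2)) := by
    rw [← ENNReal.ofReal_mul (exp_pos _).le, ← exp_add, sub_zero]
    ring_nf
  simp_rw [lintegral_stdGauss, hmerge]
  rw [lintegral_exp_neg_mul_sq_norm_sub (by positivity), ← ENNReal.ofReal_mul (by positivity),
    div_div_eq_mul_div, mul_comm π, div_rpow (by positivity) ha'.le, neg_div, mul_div_assoc',
    ← rpow_add (by positivity), neg_add_cancel, rpow_zero, rpow_neg ha'.le, one_div]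

/- Since `‖z‖ ^ 2` concentrates around `d`, the scale `4 * d` is optimal up to a constant factor:
this is where the dependence of the final bound on the dimension comes from. -/
lemma lintegral_exp_sq_norm_div_stdGauss_le_two :
    ∫⁻ z : Vec d, ENNReal.ofReal (exp (‖z‖ ^ 2 / (4 * d))) ∂stdGauss d ≤ 2 := by
  rcases Nat.eq_zero_or_pos d with rfl | hd
  · simp
  have hd' : (1 : ℝ) ≤ d := mod_cast hd
  have ha : 1 / (4 * (d : ℝ)) ≤ 1 / 4 := by gcongr; linarith
  have ha₀ : 0 < 1 / (4 * (d : ℝ)) := by positivity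
  set q : ℝ := 1 - 2 * (1 / (4 * d)) with hq
  have hbernoulli : 1 / 2 ≤ q ^ d := by
    have h := one_add_mul_le_pow (a := -(2 * (1 / (4 * (d : ℝ))))) (by linarith) d
    have hmul : (d : ℝ) * -(2 * (1 / (4 * d))) = -(1 / 2) := by field_simp; norm_num
    rw [hmul, ← sub_eq_add_neg, ← sub_eq_add_neg, ← hq] at h
    linarith
  simp only [div_eq_inv_mul (_ ^ 2), ← one_div]
  rw [lintegral_exp_mul_sq_norm_stdGauss (by linarith), ← hq, ← ENNReal.ofReal_ofNat]
  refine ENNReal.ofReal_le_ofReal ?_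
  calc q ^ (-(d : ℝ) / 2) ≤ q ^ (-(d : ℝ)) :=
        rpow_le_rpow_of_exponent_ge (by linarith) (by linarith) (by linarith)
    _ = (q ^ d)⁻¹ := by rw [rpow_neg (by linarith), rpow_natCast]
    _ ≤ (1 / 2)⁻¹ := inv_anti₀ one_half_pos hbernoulli
    _ = 2 := by norm_num

lemma sq_norm_inv_two_mul_sqrt_smul (z : Vec d) : ‖(2 * √d)⁻¹ • z‖ ^ 2 = ‖z‖ ^ 2 / (4 * d) := by
  rw [norm_smul, norm_of_nonneg (by positivity), mul_pow, inv_pow, mul_pow,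
    sq_sqrt (by positivity), inv_mul_eq_div]
  norm_num

lemma lintegral_sq_norm_smul_stdGauss_le {c : ℝ} (hc : 0 ≤ c) :
    ∫⁻ z : Vec d, ENNReal.ofReal (c * ‖(2 * √d)⁻¹ • z‖ ^ 2) ∂stdGauss d ≤
      ENNReal.ofReal c * 2 := by
  calc ∫⁻ z : Vec d, ENNReal.ofReal (c * ‖(2 * √d)⁻¹ • z‖ ^ 2) ∂stdGauss d
      ≤ ∫⁻ z : Vec d, ENNReal.ofReal c * ENNReal.ofReal (exp (‖z‖ ^ 2 / (4 * d))) ∂stdGauss d := by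
        refine lintegral_mono fun z ↦ ?_
        rw [← ENNReal.ofReal_mul hc, sq_norm_inv_two_mul_sqrt_smul]
        gcongr
        linarith [add_one_le_exp (‖z‖ ^ 2 / (4 * (d : ℝ)))]
    _ ≤ ENNReal.ofReal c * 2 := by
        rw [lintegral_const_mul' _ _ ENNReal.ofReal_ne_top]
        gcongr
        exact lintegral_exp_sq_norm_div_stdGauss_le_two

lemma lintegral_lintegral_exp_abs_inner_smul_stdGauss_le {α : Type*} {mα : MeasurableSpace α}
    {μ : Measure α} [SFinite μ] {u : α → Vec d} (hu : Measurable u) :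
    ∫⁻ z, ∫⁻ x, ENNReal.ofReal (exp |inner ℝ (u x) ((2 * √d)⁻¹ • z)|) ∂μ ∂stdGauss d ≤
      2 * ∫⁻ x, ENNReal.ofReal (exp (‖u x‖ ^ 2 / (4 * d))) ∂μ := by
  rw [lintegral_lintegral_swap (by fun_prop), ← lintegral_const_mul' _ _ ENNReal.ofNat_ne_top]
  refine lintegral_mono fun x ↦ ?_
  simp only [real_inner_smul_right, ← real_inner_smul_left]
  refine (lintegral_exp_abs_inner_stdGauss_le _).trans ?_
  rw [sq_norm_inv_two_mul_sqrt_smul]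
  have hhalf : ‖u x‖ ^ 2 / (4 * d) / 2 ≤ ‖u x‖ ^ 2 / (4 * d) := half_le_self (by positivity)
  gcongr

end StandardGaussian

section Posterior

variable {Ω E F : Type*} {mΩ : MeasurableSpace Ω}

/-- The conditional law of `ω ∼ P` given the observation `m ω + Z = x`, where `Z` is a standard
Gaussian independent of `ω`, as given by Bayes' formula. Its normalising constant
`∫ ω, exp (-‖x - m ω‖ ^ 2 / 2) ∂P` is the density at `x` of the Gaussian mixture, the law of
`m ω + Z`, up to a factor independent of `x`. -/
def posterior [NormedAddCommGroup E] (P : Measure Ω) (m : Ω → E) (x : E) : Measure Ω :=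
  P.tilted fun ω ↦ -‖x - m ω‖ ^ 2 / 2

/-- The posterior mean of `m ω - x = -Z`, which is the score at `x` of the Gaussian mixture with
mixing law `P` and centres `m`. -/
def mixtureScore [NormedAddCommGroup E] [NormedSpace ℝ E] (P : Measure Ω) (m : Ω → E) (x : E) : E :=
  ∫ ω, (m ω - x) ∂posterior P m x

lemma le_exp_sq_div_two (x : ℝ) : x ≤ exp (x ^ 2 / 2) := by
  linarith [add_one_le_exp (x ^ 2 / 2), sq_nonneg (x - 1)]

lemma norm_sub_le_exp_sq_norm_sub [NormedAddCommGroup E] (x y : E) :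
    ‖y - x‖ ≤ exp (‖x - y‖ ^ 2 / 2) := by
  rw [norm_sub_rev]
  exact le_exp_sq_div_two _

variable {P : Measure Ω} [IsProbabilityMeasure P]

section NormedGroup

variable [NormedAddCommGroup E] {m : Ω → E}

lemma integrable_exp_neg_sq_norm_sub (hm : AEStronglyMeasurable m P) (x : E) :
    Integrable (fun ω ↦ exp (-‖x - m ω‖ ^ 2 / 2)) P := by
  refine .of_bound (by fun_prop) 1 (.of_forall fun ω ↦ ?_)
  rw [norm_of_nonneg (exp_pos _).le, exp_le_one_iff]
  linarith [sq_nonneg ‖x - m ω‖]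

lemma isProbabilityMeasure_posterior (hm : AEStronglyMeasurable m P) (x : E) :
    IsProbabilityMeasure (posterior P m x) :=
  isProbabilityMeasure_tilted (integrable_exp_neg_sq_norm_sub hm x)

lemma lintegral_posterior (hm : AEStronglyMeasurable m P) (x : E) (f : Ω → ENNReal) :
    ∫⁻ ω, f ω ∂posterior P m x = (∫⁻ ω, ENNReal.ofReal (exp (-‖x - m ω‖ ^ 2 / 2)) ∂P)⁻¹ *
      ∫⁻ ω, ENNReal.ofReal (exp (-‖x - m ω‖ ^ 2 / 2)) * f ω ∂P := by
  have hweight := integrable_exp_neg_sq_norm_sub hm x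
  have hZ : 0 < ∫ ω, exp (-‖x - m ω‖ ^ 2 / 2) ∂P := integral_exp_pos hweight
  rw [posterior, lintegral_tilted, ← ofReal_integral_eq_lintegral_ofReal hweight
    (.of_forall fun _ ↦ (exp_pos _).le), ← ENNReal.ofReal_inv_of_pos hZ,
    ← lintegral_const_mul' _ _ ENNReal.ofReal_ne_top]
  refine lintegral_congr fun ω ↦ ?_
  rw [div_eq_inv_mul, ENNReal.ofReal_mul (by positivity), mul_assoc]

variable [NormedAddCommGroup F] [NormedSpace ℝ F]

lemma norm_exp_neg_smul_le {f : F} {C a : ℝ} (hf : ‖f‖ ≤ C * exp (a / 2)) :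
    ‖exp (-a / 2) • f‖ ≤ C := by
  rw [norm_smul, norm_of_nonneg (exp_pos _).le]
  calc exp (-a / 2) * ‖f‖ ≤ exp (-a / 2) * (C * exp (a / 2)) := by gcongr
    _ = C := by rw [mul_left_comm, ← exp_add, neg_div, neg_add_cancel, exp_zero, mul_one]

lemma integrable_exp_neg_sq_norm_sub_smul (hm : AEStronglyMeasurable m P) {f : Ω → F}
    (hf : AEStronglyMeasurable f P) {x : E} {C : ℝ}
    (hbound : ∀ ω, ‖f ω‖ ≤ C * exp (‖x - m ω‖ ^ 2 / 2)) :
    Integrable (fun ω ↦ exp (-‖x - m ω‖ ^ 2 / 2) • f ω) P :=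
  .of_bound (by fun_prop) C (.of_forall fun ω ↦ norm_exp_neg_smul_le (hbound ω))

lemma integrable_posterior (hm : AEStronglyMeasurable m P) {f : Ω → F}
    (hf : AEStronglyMeasurable f P) {x : E} {C : ℝ}
    (hbound : ∀ ω, ‖f ω‖ ≤ C * exp (‖x - m ω‖ ^ 2 / 2)) : Integrable f (posterior P m x) :=
  (integrable_tilted_iff (integrable_exp_neg_sq_norm_sub hm x) f).2
    (integrable_exp_neg_sq_norm_sub_smul hm hf hbound)

lemma integrable_exp_sq_norm_div_posterior (hm : AEStronglyMeasurable m P) {κ : ℝ} (hκ : 2 ≤ κ)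
    (x : E) : Integrable (fun ω ↦ exp (‖m ω - x‖ ^ 2 / κ)) (posterior P m x) := by
  refine integrable_posterior hm (C := 1) (by fun_prop) fun ω ↦ ?_
  rw [norm_of_nonneg (exp_pos _).le, one_mul, norm_sub_rev]
  gcongr

end NormedGroup

variable [NormedAddCommGroup E] [InnerProductSpace ℝ E] {m : Ω → E}

lemma integrable_sub_posterior (hm : AEStronglyMeasurable m P) (x : E) :
    Integrable (fun ω ↦ m ω - x) (posterior P m x) :=
  integrable_posterior hm (C := 1) (by fun_prop) fun _ ↦ by
    simpa only [one_mul] using norm_sub_le_exp_sq_norm_sub _ _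

lemma posterior_add (hm : AEStronglyMeasurable m P) (x δ : E) :
    posterior P m (x + δ) = (posterior P m x).tilted fun ω ↦ inner ℝ (m ω - x) δ := by
  have hconst := tilted_tilted (μ := P) (f := fun _ ↦ -‖δ‖ ^ 2 / 2) (integrable_const _)
    ((fun ω ↦ -‖x - m ω‖ ^ 2 / 2) + fun ω ↦ inner ℝ (m ω - x) δ)
  rw [tilted_const] at hconst
  rw [posterior, posterior, tilted_tilted (integrable_exp_neg_sq_norm_sub hm x), hconst]
  congr 1 with ω
  simp only [Pi.add_apply]
  rw [add_sub_right_comm, norm_add_sq_real, ← neg_sub (m ω) x, inner_neg_left]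
  ring

lemma mixtureScore_sub_mixtureScore_add [CompleteSpace E]
    (hm : AEStronglyMeasurable m P) (x δ : E) :
    mixtureScore P m x - mixtureScore P m (x + δ) =
      δ - (∫ ω, (m ω - x) ∂(posterior P m x).tilted (fun ω ↦ inner ℝ (m ω - x) δ) -
        ∫ ω, (m ω - x) ∂posterior P m x) := by
  have := isProbabilityMeasure_posterior hm (x + δ)
  have hshift : ∫ ω, (m ω - x) ∂posterior P m (x + δ) = mixtureScore P m (x + δ) + δ := by
    have h := integral_add (integrable_sub_posterior hm (x + δ)) (integrable_const δ)
    simpa [mixtureScore, sub_add_eq_sub_sub] using h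
  rw [← posterior_add hm, hshift, mixtureScore]
  abel

lemma hasFDerivAt_exp_neg_sq_norm_sub (x y : E) :
    HasFDerivAt (fun z ↦ exp (-‖z - y‖ ^ 2 / 2))
      (innerSL ℝ (exp (-‖x - y‖ ^ 2 / 2) • (y - x))) x := by
  have hfun : (fun z ↦ exp (-‖z - y‖ ^ 2 / 2)) = fun z ↦ exp (-(1 / 2) * ‖z - y‖ ^ 2) := by
    ext z
    ring_nf
  rw [congrFun hfun x, hfun, ← neg_sub x y, map_smul, map_neg]
  refine (((hasFDerivAt_id x).sub_const y).norm_sq.const_mul (-(1 / 2))).exp.congr_fderiv ?_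
  rw [ContinuousLinearMap.comp_id, id_eq]
  module

lemma hasGradientAt_log_integral_exp [CompleteSpace E] (hm : AEStronglyMeasurable m P) (x : E) :
    HasGradientAt (fun x ↦ log (∫ ω, exp (-‖x - m ω‖ ^ 2 / 2) ∂P)) (mixtureScore P m x) x := by
  have hweight (x : E) := integrable_exp_neg_sq_norm_sub hm x
  have hgrad : Integrable (fun ω ↦ exp (-‖x - m ω‖ ^ 2 / 2) • (m ω - x)) P :=
    integrable_exp_neg_sq_norm_sub_smul hm (C := 1) (by fun_prop) fun _ ↦ by
      simpa only [one_mul] using norm_sub_le_exp_sq_norm_sub _ _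
  have hderiv : HasFDerivAt (fun x ↦ ∫ ω, exp (-‖x - m ω‖ ^ 2 / 2) ∂P)
      (innerSL ℝ (∫ ω, exp (-‖x - m ω‖ ^ 2 / 2) • (m ω - x) ∂P)) x := by
    rw [← (innerSL ℝ).integral_comp_comm hgrad]
    refine hasFDerivAt_integral_of_dominated_of_fderiv_le (bound := fun _ ↦ 1) Filter.univ_mem
      (.of_forall fun x ↦ (hweight x).1) (hweight x)
      ((innerSL ℝ).continuous.comp_aestronglyMeasurable hgrad.1)
      (.of_forall fun ω z _ ↦ ?_) (integrable_const 1)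
      (.of_forall fun ω z _ ↦ hasFDerivAt_exp_neg_sq_norm_sub z (m ω))
    rw [innerSL_apply_norm]
    exact norm_exp_neg_smul_le (by simpa only [one_mul] using norm_sub_le_exp_sq_norm_sub _ _)
  have hscore : mixtureScore P m x = (∫ ω, exp (-‖x - m ω‖ ^ 2 / 2) ∂P)⁻¹ •
      ∫ ω, exp (-‖x - m ω‖ ^ 2 / 2) • (m ω - x) ∂P := by
    simp only [mixtureScore, posterior, integral_tilted, div_eq_inv_mul _ (∫ _, _ ∂P), mul_smul,
      integral_smul]
  rw [hasGradientAt_iff_hasFDerivAt, hscore]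
  exact (hderiv.log (integral_exp_pos (hweight x)).ne').congr_fderiv (by ext v; simp)

lemma integrable_exp_abs_inner_posterior (hm : AEStronglyMeasurable m P) (x w : E) :
    Integrable (fun ω ↦ exp |inner ℝ (m ω - x) w|) (posterior P m x) := by
  refine integrable_posterior hm (C := exp (‖w‖ ^ 2 / 2)) (by fun_prop) fun ω ↦ ?_
  rw [norm_of_nonneg (exp_pos _).le, ← exp_add, exp_le_exp, norm_sub_rev]
  linarith [abs_real_inner_le_norm (m ω - x) w, two_mul_le_add_sq ‖m ω - x‖ ‖w‖]

lemma sq_norm_mixtureScore_sub_mixtureScore_add_le [CompleteSpace E]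
    (hm : AEStronglyMeasurable m P) {κ ε : ℝ} (hκ : 2 ≤ κ) (hε₀ : 0 ≤ ε) (hε₁ : ε ≤ 1) (x w : E) :
    ‖mixtureScore P m x - mixtureScore P m (x + (ε / 8) • w)‖ ^ 2 ≤
      ε ^ 2 / 32 * ‖w‖ ^ 2 + 2 * κ * ε ^ 2 * (∫ ω, exp (‖m ω - x‖ ^ 2 / κ) ∂posterior P m x +
        ∫ ω, exp |inner ℝ (m ω - x) w| ∂posterior P m x) := by
  have := isProbabilityMeasure_posterior hm x
  have hu : AEStronglyMeasurable (fun ω ↦ m ω - x) (posterior P m x) :=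
    (integrable_sub_posterior hm x).1
  have htilt := sq_norm_integral_tilted_mul_sub_integral_le_add hε₀ hε₁ (by linarith)
    (hu.inner aestronglyMeasurable_const) (integrable_exp_abs_inner_posterior hm x w) hu
    (integrable_exp_sq_norm_div_posterior hm hκ x)
  have hinner (ω : Ω) : inner ℝ (m ω - x) ((ε / 8) • w) = ε * (inner ℝ (m ω - x) w / 8) := by
    rw [real_inner_smul_right]
    ring
  simp only [mixtureScore_sub_mixtureScore_add hm, hinner]
  set Δ := ∫ ω, (m ω - x) ∂(posterior P m x).tilted (fun ω ↦ ε * (inner ℝ (m ω - x) w / 8)) -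
    ∫ ω, (m ω - x) ∂posterior P m x
  calc ‖(ε / 8) • w - Δ‖ ^ 2 ≤ (‖(ε / 8) • w‖ + ‖Δ‖) ^ 2 := by gcongr; exact norm_sub_le _ _
    _ ≤ 2 * (‖(ε / 8) • w‖ ^ 2 + ‖Δ‖ ^ 2) := add_sq_le
    _ = ε ^ 2 / 32 * ‖w‖ ^ 2 + 2 * ‖Δ‖ ^ 2 := by
        rw [norm_smul, norm_of_nonneg (by positivity)]
        ring
    _ ≤ _ := by linarith

lemma sq_enorm_mixtureScore_sub_mixtureScore_add_le [CompleteSpace E]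
    (hm : AEStronglyMeasurable m P) {κ ε : ℝ} (hκ : 2 ≤ κ) (hε₀ : 0 ≤ ε) (hε₁ : ε ≤ 1) (x w : E) :
    ‖mixtureScore P m x - mixtureScore P m (x + (ε / 8) • w)‖ₑ ^ 2 ≤
      ENNReal.ofReal (ε ^ 2 / 32 * ‖w‖ ^ 2) + ENNReal.ofReal (2 * κ * ε ^ 2) *
        (∫⁻ ω, ENNReal.ofReal (exp (‖m ω - x‖ ^ 2 / κ)) ∂posterior P m x +
          ∫⁻ ω, ENNReal.ofReal (exp |inner ℝ (m ω - x) w|) ∂posterior P m x) := by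
  rw [← ofReal_norm, ← ENNReal.ofReal_pow (norm_nonneg _),
    ← ofReal_integral_eq_lintegral_ofReal (integrable_exp_sq_norm_div_posterior hm hκ x)
      (.of_forall fun _ ↦ (exp_pos _).le),
    ← ofReal_integral_eq_lintegral_ofReal (integrable_exp_abs_inner_posterior hm x w)
      (.of_forall fun _ ↦ (exp_pos _).le),
    ← ENNReal.ofReal_add (by positivity) (by positivity), ← ENNReal.ofReal_mul (by positivity),
    ← ENNReal.ofReal_add (by positivity) (by positivity)]
  exact ENNReal.ofReal_le_ofReal (sq_norm_mixtureScore_sub_mixtureScore_add_le hm hκ hε₀ hε₁ x w)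

end Posterior

section GaussianMixture

variable {d : ℕ} {Ω : Type*} {mΩ : MeasurableSpace Ω} {P : Measure Ω} {m : Ω → Vec d}

lemma lintegral_lintegral_add_stdGauss [SFinite P] (hm : Measurable m)
    {F : Ω → Vec d → ENNReal} (hF : Measurable (Function.uncurry F)) :
    ∫⁻ ω, ∫⁻ z, F ω (m ω + z) ∂stdGauss d ∂P = ENNReal.ofReal ((2 * π) ^ (-(d : ℝ) / 2)) *
      ∫⁻ x, ∫⁻ ω, ENNReal.ofReal (exp (-‖x - m ω‖ ^ 2 / 2)) * F ω x ∂P := by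
  have htranslate (ω : Ω) : ∫⁻ z, ENNReal.ofReal (exp (-‖z‖ ^ 2 / 2)) * F ω (m ω + z) =
      ∫⁻ x, ENNReal.ofReal (exp (-‖x - m ω‖ ^ 2 / 2)) * F ω x := by
    simpa only [add_sub_cancel_left] using lintegral_add_left_eq_self
      (fun x ↦ ENNReal.ofReal (exp (-‖x - m ω‖ ^ 2 / 2)) * F ω x) (m ω)
  simp_rw [lintegral_stdGauss, htranslate]
  rw [lintegral_const_mul' _ _ ENNReal.ofReal_ne_top, lintegral_lintegral_swap]
  exact (Measurable.mul (by fun_prop) hF).aemeasurable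

variable [IsProbabilityMeasure P]

lemma lintegral_lintegral_posterior (hm : Measurable m) {F : Ω → Vec d → ENNReal}
    (hF : Measurable (Function.uncurry F)) :
    ∫⁻ ω, ∫⁻ z, ∫⁻ ω', F ω' (m ω + z) ∂posterior P m (m ω + z) ∂stdGauss d ∂P =
      ∫⁻ ω, ∫⁻ z, F ω (m ω + z) ∂stdGauss d ∂P := by
  have hm' : AEStronglyMeasurable m P := hm.aestronglyMeasurable
  have hpost : Measurable fun x ↦ ∫⁻ ω, F ω x ∂posterior P m x := by
    simp only [lintegral_posterior hm']
    refine (Measurable.lintegral_prod_right (by fun_prop)).inv.mul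
      (Measurable.lintegral_prod_right (.mul (by fun_prop) (hF.comp measurable_swap)))
  rw [lintegral_lintegral_add_stdGauss hm (F := fun _ x ↦ ∫⁻ ω, F ω x ∂posterior P m x)
    (hpost.comp measurable_snd), lintegral_lintegral_add_stdGauss hm hF]
  congr 1
  refine lintegral_congr fun x ↦ ?_
  have hweight := integrable_exp_neg_sq_norm_sub hm' x
  rw [lintegral_mul_const _ (by fun_prop), lintegral_posterior hm', ENNReal.mul_inv_cancel_left]
  · rw [← ofReal_integral_eq_lintegral_ofReal hweight (.of_forall fun _ ↦ (exp_pos _).le)]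
    simpa using integral_exp_pos hweight
  · exact hweight.lintegral_lt_top.ne

lemma lintegral_sq_enorm_mixtureScore_sub_le [NeZero d] (hm : Measurable m) {ε : ℝ}
    (hε₀ : 0 ≤ ε) (hε₁ : ε ≤ 1) (x : Vec d) :
    ∫⁻ z, ‖mixtureScore P m x - mixtureScore P m (x + (ε / 8) • (2 * √d)⁻¹ • z)‖ₑ ^ 2
      ∂stdGauss d ≤ ENNReal.ofReal (ε ^ 2 / 16) + ENNReal.ofReal (24 * d * ε ^ 2) *
        ∫⁻ ω, ENNReal.ofReal (exp (‖m ω - x‖ ^ 2 / (4 * d))) ∂posterior P m x := by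
  have hm' : AEStronglyMeasurable m P := hm.aestronglyMeasurable
  have := isProbabilityMeasure_posterior hm' x
  have hd : (1 : ℝ) ≤ d := mod_cast NeZero.one_le
  set V := ∫⁻ ω, ENNReal.ofReal (exp (‖m ω - x‖ ^ 2 / (4 * d))) ∂posterior P m x
  calc ∫⁻ z, ‖mixtureScore P m x - mixtureScore P m (x + (ε / 8) • (2 * √d)⁻¹ • z)‖ₑ ^ 2
        ∂stdGauss d
      ≤ ∫⁻ z, (ENNReal.ofReal (ε ^ 2 / 32 * ‖(2 * √d)⁻¹ • z‖ ^ 2) +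
          ENNReal.ofReal (2 * (4 * d) * ε ^ 2) * (V + ∫⁻ ω, ENNReal.ofReal
            (exp |inner ℝ (m ω - x) ((2 * √d)⁻¹ • z)|) ∂posterior P m x)) ∂stdGauss d :=
        lintegral_mono fun z ↦ sq_enorm_mixtureScore_sub_mixtureScore_add_le hm' (by linarith)
          hε₀ hε₁ x _
    _ ≤ ENNReal.ofReal (ε ^ 2 / 32) * 2 + ENNReal.ofReal (2 * (4 * d) * ε ^ 2) * (V + 2 * V) := by
        rw [lintegral_add_left (by fun_prop), lintegral_const_mul' _ _ ENNReal.ofReal_ne_top,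
          lintegral_add_left (by fun_prop), lintegral_const, measure_univ, mul_one]
        gcongr
        · exact lintegral_sq_norm_smul_stdGauss_le (by positivity)
        · exact lintegral_lintegral_exp_abs_inner_smul_stdGauss_le (by fun_prop)
    _ = ENNReal.ofReal (ε ^ 2 / 16) + ENNReal.ofReal (24 * d * ε ^ 2) * V := by
        rw [← one_add_mul, ← mul_assoc, show (1 : ENNReal) + 2 = ENNReal.ofReal 3 by norm_num,
          ← ENNReal.ofReal_ofNat 2, ← ENNReal.ofReal_mul (by positivity),
          ← ENNReal.ofReal_mul (by positivity)]
        ring_nf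

lemma lintegral_lintegral_exp_sq_norm_posterior_le_two (hm : Measurable m) :
    ∫⁻ ω, ∫⁻ z, ∫⁻ ω', ENNReal.ofReal (exp (‖m ω' - (m ω + z)‖ ^ 2 / (4 * d)))
      ∂posterior P m (m ω + z) ∂stdGauss d ∂P ≤ 2 := by
  rw [lintegral_lintegral_posterior hm
    (F := fun ω x ↦ ENNReal.ofReal (exp (‖m ω - x‖ ^ 2 / (4 * d)))) (by fun_prop)]
  simpa using lintegral_mono (μ := P) fun _ ↦ lintegral_exp_sq_norm_div_stdGauss_le_two (d := d)

lemma lintegral_sq_enorm_mixtureScore_add_sub_le [NeZero d] (hm : Measurable m) {r : ℝ}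
    (hr₀ : 0 ≤ r) (hr₁ : 256 * d * r ^ 2 ≤ 1) :
    ∫⁻ ω, ∫⁻ z, ∫⁻ z', ‖mixtureScore P m (m ω + z) - mixtureScore P m (m ω + z + r • z')‖ₑ ^ 2
      ∂stdGauss d ∂stdGauss d ∂P ≤ ENNReal.ofReal (2 ^ 14 * d ^ 2 * r ^ 2) := by
  have hd : (1 : ℝ) ≤ d := mod_cast NeZero.one_le
  set ε : ℝ := 16 * √d * r with hε
  have hε_sq : ε ^ 2 = 256 * d * r ^ 2 := by
    rw [hε, mul_pow, mul_pow, sq_sqrt (by positivity)]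
    norm_num
  have hstep (z' : Vec d) : r • z' = (ε / 8) • (2 * √d)⁻¹ • z' := by
    rw [smul_smul, hε]
    congr 1
    field_simp
    ring
  simp only [hstep]
  refine (lintegral_mono fun ω ↦ lintegral_mono fun z ↦ lintegral_sq_enorm_mixtureScore_sub_le hm
    (by positivity) ((sq_le_one_iff₀ (by positivity)).1 (hε_sq ▸ hr₁)) _).trans ?_
  simp only [lintegral_add_left measurable_const, lintegral_const, measure_univ, mul_one,
    lintegral_const_mul' _ _ ENNReal.ofReal_ne_top]
  calc _ ≤ ENNReal.ofReal (ε ^ 2 / 16) + ENNReal.ofReal (24 * d * ε ^ 2) * 2 := by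
        gcongr
        exact lintegral_lintegral_exp_sq_norm_posterior_le_two hm
    _ = ENNReal.ofReal (ε ^ 2 / 16 + 24 * d * ε ^ 2 * 2) := by
        rw [ENNReal.ofReal_add (by positivity) (by positivity),
          ENNReal.ofReal_mul (p := 24 * d * ε ^ 2) (by positivity), ENNReal.ofReal_ofNat]
    _ ≤ ENNReal.ofReal (2 ^ 14 * d ^ 2 * r ^ 2) := by
        rw [hε_sq]
        refine ENNReal.ofReal_le_ofReal ?_
        have : d * r ^ 2 ≤ d ^ 2 * r ^ 2 := by gcongr; exact le_self_pow₀ hd two_ne_zero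
        nlinarith [sq_nonneg (d * r)]

end GaussianMixture

section ForwardProcess

variable {d : ℕ} {P : Measure (Vec d)} {g : ℝ → ℝ} {t s : ℝ}

lemma inv_sqrt_sigmaSq_smul_xt (hσ : 0 < sigmaSq g t) (ω : Vec d × Vec d × Vec d) :
    (√(sigmaSq g t))⁻¹ • xt d g t ω = (√(sigmaSq g t))⁻¹ • alphaF g 0 t • ω.1 + ω.2.1 := by
  rw [xt, smul_add, inv_smul_smul₀ (sqrt_pos.2 hσ).ne']

lemma inv_alphaF_smul_xts (ω : Vec d × Vec d × Vec d) :
    (alphaF g t s)⁻¹ • xts d g t s ω = xt d g t ω + √(exp (Gvar g t s) - 1) • ω.2.2 := by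
  have hα : 0 < alphaF g t s := exp_pos _
  have hα_sq : (alphaF g t s) ^ 2 = (exp (Gvar g t s))⁻¹ := by
    rw [alphaF, ← exp_nat_mul, ← exp_neg]
    congr 1
    push_cast
    ring
  have hsqrt : (alphaF g t s)⁻¹ * √(1 - (alphaF g t s) ^ 2) = √(exp (Gvar g t s) - 1) := by
    rw [← sqrt_sq (inv_pos.2 hα).le, ← sqrt_mul (sq_nonneg _), inv_pow, hα_sq, inv_inv, mul_sub,
      mul_one, mul_inv_cancel₀ (exp_pos _).ne']
  rw [xts, smul_add, inv_smul_smul₀ hα.ne', smul_smul, hsqrt]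

lemma forwardDensity_eq_mul_integral (hσ : 0 < sigmaSq g t) (x : Vec d) :
    forwardDensity d P g t x = (2 * π * sigmaSq g t) ^ (-(d : ℝ) / 2) *
      ∫ y, exp (-‖(√(sigmaSq g t))⁻¹ • x - (√(sigmaSq g t))⁻¹ • alphaF g 0 t • y‖ ^ 2 / 2) ∂P := by
  simp only [forwardDensity, ← smul_sub, norm_smul, mul_pow, norm_inv,
    norm_of_nonneg (sqrt_nonneg _), inv_pow, sq_sqrt hσ.le]
  congr! 4 with y
  field_simp

lemma fwdScore_eq_smul_mixtureScore [IsProbabilityMeasure P] (hσ : 0 < sigmaSq g t) (x : Vec d) :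
    fwdScore d P g t x = (√(sigmaSq g t))⁻¹ • mixtureScore P
      (fun y ↦ (√(sigmaSq g t))⁻¹ • alphaF g 0 t • y) ((√(sigmaSq g t))⁻¹ • x) := by
  set c := (√(sigmaSq g t))⁻¹
  have hm : AEStronglyMeasurable (fun y : Vec d ↦ c • alphaF g 0 t • y) P := by fun_prop
  have hlog : (fun z ↦ log (forwardDensity d P g t z)) =
      fun z ↦ log ((2 * π * sigmaSq g t) ^ (-(d : ℝ) / 2)) +
        log (∫ y, exp (-‖c • z - c • alphaF g 0 t • y‖ ^ 2 / 2) ∂P) := by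
    ext z
    rw [forwardDensity_eq_mul_integral hσ,
      log_mul (by positivity) (integral_exp_pos (integrable_exp_neg_sq_norm_sub hm _)).ne']
  rw [fwdScore, scoreOf, hlog]
  refine HasGradientAt.gradient (hasGradientAt_iff_hasFDerivAt.2 ?_)
  have hcomp := (hasGradientAt_log_integral_exp hm (c • x)).hasFDerivAt.comp x
    ((hasFDerivAt_id x).const_smul c)
  refine (hcomp.const_add _).congr_fderiv ?_
  ext w
  simp

lemma lintegral_coupleMeasure_le [SFinite P] (f : Vec d × Vec d × Vec d → ENNReal) :
    ∫⁻ ω, f ω ∂coupleMeasure d P ≤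
      ∫⁻ y, ∫⁻ z, ∫⁻ z', f (y, z, z') ∂stdGauss d ∂stdGauss d ∂P :=
  (lintegral_prod_le f).trans (lintegral_mono fun y ↦ lintegral_prod_le fun z ↦ f (y, z))

lemma lintegral_sq_enorm_fwdScore_sub_le [NeZero d] [IsProbabilityMeasure P]
    (hσ : 0 < sigmaSq g t) (hG : 0 ≤ Gvar g t s)
    (hsmall : 256 * d * ((exp (Gvar g t s) - 1) / sigmaSq g t) ≤ 1) :
    ∫⁻ ω, ‖fwdScore d P g t (xt d g t ω) -
        fwdScore d P g t ((alphaF g t s)⁻¹ • xts d g t s ω)‖ₑ ^ 2 ∂coupleMeasure d P ≤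
      ENNReal.ofReal (2 ^ 14 * d ^ 2 * (exp (Gvar g t s) - 1) / sigmaSq g t ^ 2) := by
  set c := (√(sigmaSq g t))⁻¹ with hc
  set m : Vec d → Vec d := fun y ↦ c • alphaF g 0 t • y
  set r := c * √(exp (Gvar g t s) - 1) with hr
  have hc_sq : c ^ 2 = (sigmaSq g t)⁻¹ := by rw [hc, inv_pow, sq_sqrt hσ.le]
  have hr_sq : r ^ 2 = (exp (Gvar g t s) - 1) / sigmaSq g t := by
    rw [hr, mul_pow, hc_sq, sq_sqrt (sub_nonneg.2 (one_le_exp hG)), inv_mul_eq_div]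
  have hscore (ω : Vec d × Vec d × Vec d) : ‖fwdScore d P g t (xt d g t ω) -
      fwdScore d P g t ((alphaF g t s)⁻¹ • xts d g t s ω)‖ₑ ^ 2 = ENNReal.ofReal (c ^ 2) *
        ‖mixtureScore P m (m ω.1 + ω.2.1) -
          mixtureScore P m (m ω.1 + ω.2.1 + r • ω.2.2)‖ₑ ^ 2 := by
    rw [fwdScore_eq_smul_mixtureScore hσ, fwdScore_eq_smul_mixtureScore hσ, ← smul_sub,
      inv_alphaF_smul_xts, smul_add, inv_sqrt_sigmaSq_smul_xt hσ, ← hc, hr, mul_smul, enorm_smul,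
      mul_pow, Real.enorm_of_nonneg (by positivity), ← ENNReal.ofReal_pow (by positivity)]
  simp_rw [hscore]
  rw [lintegral_const_mul' _ _ ENNReal.ofReal_ne_top]
  calc _ ≤ ENNReal.ofReal (c ^ 2) * ENNReal.ofReal (2 ^ 14 * d ^ 2 * r ^ 2) := by
        gcongr
        exact (lintegral_coupleMeasure_le _).trans
          (lintegral_sq_enorm_mixtureScore_add_sub_le (by fun_prop) (by positivity)
            (hr_sq ▸ hsmall))
    _ = _ := by
        rw [← ENNReal.ofReal_mul (by positivity), hc_sq, hr_sq]
        congr 1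
        field_simp

lemma sigmaSq_le_one : sigmaSq g t ≤ 1 := sub_le_self 1 (exp_pos _).le

lemma Gvar_nonneg (hts : t ≤ s) : 0 ≤ Gvar g t s :=
  intervalIntegral.integral_nonneg hts fun _ _ ↦ sq_nonneg _

lemma intervalIntegrable_sq {T : ℝ} (hg : ContinuousOn g (Set.Icc 0 T)) (ht : 0 ≤ t) (hts : t ≤ s)
    (hsT : s ≤ T) : IntervalIntegrable (fun u ↦ g u ^ 2) volume t s :=
  ((hg.pow 2).mono (Set.uIcc_of_le hts ▸ Set.Icc_subset_Icc ht hsT)).intervalIntegrable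

lemma sigmaSq_pos {T : ℝ} (hg : ContinuousOn g (Set.Icc 0 T))
    (hg_pos : ∀ u ∈ Set.Ioc 0 T, 0 < g u) (ht : 0 < t) (htT : t ≤ T) : 0 < sigmaSq g t := by
  have hG : 0 < Gvar g 0 t := intervalIntegral.intervalIntegral_pos_of_pos_on
    (intervalIntegrable_sq hg le_rfl ht.le htT)
    (fun u hu ↦ pow_pos (hg_pos u ⟨hu.1, hu.2.le.trans htT⟩) 2) ht
  exact sub_pos.2 (exp_lt_one_iff.2 (neg_lt_zero.2 hG))

end ForwardProcess

theorem statement9_general :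
    ∃ K : ℝ, 0 < K ∧ ∀ (d : ℕ) (t s : ℝ) (P : Measure (Vec d)) (g : ℝ → ℝ),
      IsProbabilityMeasure P → IntervalIntegrable (fun u ↦ g u ^ 2) volume t s → t ≤ s →
      0 < sigmaSq g t → Gvar g t s / sigmaSq g t ≤ 1 / (K * d) →
      ∫⁻ ω, ‖fwdScore d P g t (xt d g t ω) -
          fwdScore d P g t ((alphaF g t s)⁻¹ • xts d g t s ω)‖ₑ ^ 2 ∂coupleMeasure d P ≤
        ENNReal.ofReal (K * d ^ 2 * Gvar g t s / sigmaSq g t ^ 2) := by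
  refine ⟨2 ^ 15, by positivity, fun d t s P g hP _ hts hσ hsmall ↦ ?_⟩
  rcases eq_or_ne d 0 with rfl | hd
  · simp [Subsingleton.elim _ (0 : Vec 0)]
  have : NeZero d := ⟨hd⟩
  have hd₁ : (1 : ℝ) ≤ d := mod_cast NeZero.one_le
  have hG : 0 ≤ Gvar g t s := Gvar_nonneg hts
  have hratio : d * (Gvar g t s / sigmaSq g t) ≤ 1 / 2 ^ 15 :=
    calc d * (Gvar g t s / sigmaSq g t) ≤ d * (1 / (2 ^ 15 * d)) := by gcongr
      _ = 1 / 2 ^ 15 := by field_simp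
  have hG₁ : Gvar g t s ≤ 1 :=
    calc Gvar g t s ≤ d * (Gvar g t s / sigmaSq g t) :=
          (le_div_self hG hσ sigmaSq_le_one).trans (le_mul_of_one_le_left (by positivity) hd₁)
      _ ≤ 1 := hratio.trans (by norm_num)
  have hexp : exp (Gvar g t s) - 1 ≤ 2 * Gvar g t s := by
    simpa only [abs_of_nonneg hG] using
      (le_abs_self _).trans (abs_exp_sub_one_le ((abs_of_nonneg hG).trans_le hG₁))
  refine (lintegral_sq_enorm_fwdScore_sub_le hσ hG ?_).trans (ENNReal.ofReal_le_ofReal ?_)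
  · calc 256 * d * ((exp (Gvar g t s) - 1) / sigmaSq g t)
        ≤ 256 * d * (2 * Gvar g t s / sigmaSq g t) := by gcongr
      _ = 512 * (d * (Gvar g t s / sigmaSq g t)) := by ring
      _ ≤ 1 := by linarith
  · calc 2 ^ 14 * d ^ 2 * (exp (Gvar g t s) - 1) / sigmaSq g t ^ 2
        ≤ 2 ^ 14 * d ^ 2 * (2 * Gvar g t s) / sigmaSq g t ^ 2 := by gcongr
      _ = 2 ^ 15 * d ^ 2 * Gvar g t s / sigmaSq g t ^ 2 := by ring

/-- Lemma `noLip`: high-probability Hessian bound and change of measure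
control the space-discretization error of the score without smoothness assumptions. -/
theorem statement9 :
    ∃ K : ℝ, 0 < K ∧
      ∀ (d : ℕ) (T t s : ℝ) (P : Measure (Vec d)) (g : ℝ → ℝ),
        IsProbabilityMeasure P →
        ContinuousOn g (Set.Icc 0 T) → (∀ u ∈ Set.Ioc (0 : ℝ) T, 0 < g u) →
        0 < t → t ≤ s → s ≤ T →
        Gvar g t s / sigmaSq g t ≤ 1 / (K * d) →
        (∫ ω, ‖fwdScore d P g t (xt d g t ω) -
              fwdScore d P g t ((alphaF g t s)⁻¹ • xts d g t s ω)‖ ^ 2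
            ∂(coupleMeasure d P)) ≤
          K * d ^ 2 * Gvar g t s / (sigmaSq g t) ^ 2 := by
  obtain ⟨K, hK, hbound⟩ := statement9_general
  refine ⟨K, hK, fun d T t s P g hP hg hg_pos ht hts hsT hsmall ↦
    integral_sq_norm_le_of_lintegral_sq_enorm_le ?_ (hbound d t s P g hP
      (intervalIntegrable_sq hg ht.le hts hsT) hts
      (sigmaSq_pos hg hg_pos ht (hts.trans hsT)) hsmall)⟩
  have := Gvar_nonneg (g := g) hts
  positivity

end DiffusionKL
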